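/- There is no bijection σ : {1,2,3,…} → ℤ² with the following property: for every finitely supported function u : ℤ² → [0,∞), the rearranged function u^# defined by u^#(σ(k)) = a_k — where a₁ ≥ a₂ ≥ a₃ ≥ ⋯ are the values of u listed in decreasing order counted with multiplicity — satisfies ‖∇u^#‖₂ ≤ ‖∇u‖₂. -/

import Mathlib

open Filter Topology

noncomputable section

abbrev ZLat (d : ℕ) := Fin d → ℤ

def stdVec (d : ℕ) (i : Fin d) : Fin d → ℝ := fun j => if j = i then 1 else 0

/-- The set of directions E⃗ ⊆ ℝ^d. -/
def Evec (d : ℕ) : Set (Fin d → ℝ) :=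
  {e | (∃ i, e = stdVec d i) ∨
    (∃ i j : Fin d, i < j ∧ e = fun k => (stdVec d i k + stdVec d j k) / 2) ∨
    (∃ i j : Fin d, i < j ∧ e = fun k => (stdVec d i k - stdVec d j k) / 2)}

/-- A fixed enumeration of E⃗ (for d = 2 it is e₁, e₂, (e₁+e₂)/2, (e₁-e₂)/2). -/
def EvecList (d : ℕ) : List (Fin d → ℝ) :=
  ((List.finRange d).map (stdVec d)) ++
  ((List.finRange d).flatMap fun i => (List.finRange d).filterMap fun j =>
    if i < j then some (fun k => (stdVec d i k + stdVec d j k) / 2) else none) ++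
  ((List.finRange d).flatMap fun i => (List.finRange d).filterMap fun j =>
    if i < j then some (fun k => (stdVec d i k - stdVec d j k) / 2) else none)

/-- The n-th largest value of `u`, counted with multiplicity (1-indexed). -/
def nthLargest {α : Type*} (u : α → NNReal) (n : ℕ) : NNReal :=
  sSup {t | ∃ Ω : Finset α, Ω.card = n ∧ ∀ x ∈ Ω, t ≤ u x}

/-- The 1-indexed position of the point with doubled coordinate `m` in the
spiral order 0, 1, −1, 2, −2, … (for even m) resp. 1/2, −1/2, 3/2, −3/2, … (for odd m). -/
def posIdx (m : ℤ) : ℕ := (if 0 < m then m else 1 - m).toNat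

/-- `x` and `y` lie on a common line with direction `e`. -/
def sameLine {d : ℕ} (e : Fin d → ℝ) (x y : ZLat d) : Prop :=
  ∃ c : ℝ, (fun i => (x i : ℝ) - (y i : ℝ)) = c • e

/-- Twice the inner product ⟨e, x⟩, as an integer. -/
def pairing {d : ℕ} (e : Fin d → ℝ) (x : ZLat d) : ℤ :=
  ⌊2 * ∑ i, e i * (x i : ℝ)⌋

/-- One-step rearrangement `R_e`. -/
def stepR {d : ℕ} (e : Fin d → ℝ) (u : ZLat d → NNReal) : ZLat d → NNReal :=
  fun x => nthLargest (fun y : {y : ZLat d // sameLine e x y} => u y.1) (posIdx (pairing e x))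

/-- `R^k u` : k successive one-step rearrangements cycling through the fixed enumeration. -/
def iterR (d : ℕ) (u : ZLat d → NNReal) : ℕ → ZLat d → NNReal
  | 0 => u
  | k + 1 => stepR ((EvecList d).getD (k % (EvecList d).length) 0) (iterR d u k)

/-- The Schwarz rearrangement on ℤ^d : pointwise limit of `R^k u`. -/
def RZd (d : ℕ) (u : ZLat d → NNReal) : ZLat d → NNReal :=
  fun x => limUnder atTop fun k => iterR d u k x

def Admissible {α : Type*} (u : α → NNReal) : Prop :=
  ∀ t : NNReal, 0 < t → {x | t < u x}.Finite

def Equimeasurable {α : Type*} (u v : α → NNReal) : Prop :=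
  ∀ t : NNReal, 0 < t → Nonempty ({x | t < u x} ≃ {x | t < v x})

/-- Graph distance (ℓ¹ distance) on the lattice ℤ^d. -/
def latDist {d : ℕ} (x y : ZLat d) : ℕ := ∑ i, (x i - y i).natAbs

/-- The i-th standard basis vector of ℤ^d. -/
def latE {d : ℕ} (i : Fin d) : ZLat d := fun j => if j = i then 1 else 0

/-- ‖∇u‖_p^p : the p-Sobolev energy, summing over each edge {x, x+e_i} once. -/
def gradEnergy (d : ℕ) (p : ℝ) (u : ZLat d → NNReal) : ENNReal :=
  ∑' (x : ZLat d) (i : Fin d), ENNReal.ofReal (|(u (x + latE i) : ℝ) - (u x : ℝ)| ^ p)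

/-- ‖∇u‖_p. -/
def gradNorm (d : ℕ) (p : ℝ) (u : ZLat d → NNReal) : ENNReal :=
  gradEnergy d p u ^ (1 / p)

/-- Graph automorphism of the lattice graph ℤ^d. -/
def IsLatAuto {d : ℕ} (σ : ZLat d ≃ ZLat d) : Prop :=
  ∀ x y : ZLat d, latDist (σ x) (σ y) = 1 ↔ latDist x y = 1

def Supermodular (G : NNReal → NNReal → NNReal) : Prop :=
  ∀ s t s₀ t₀ : NNReal, G (s + s₀) t + G s (t + t₀) ≤ G (s + s₀) (t + t₀) + G s t

def StrictlySupermodular (G : NNReal → NNReal → NNReal) : Prop :=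
  ∀ s t s₀ t₀ : NNReal, 0 < s₀ → 0 < t₀ →
    G (s + s₀) t + G s (t + t₀) < G (s + s₀) (t + t₀) + G s t

/-- The values of `u` are strictly decreasing: a₁ > a₂ > a₃ > ⋯ . -/
def StrictRan {α : Type*} (u : α → NNReal) : Prop :=
  ∀ n : ℕ, 0 < n → nthLargest u (n + 1) < nthLargest u n

/-!
On a lattice edge leaving a large peak, a jump of height `m + 1` costs about `p m ^ (p - 1)` more
than one of height `m`. So if `u` has one high peak at `σ 0` and the value `1` at its `2d`
neighbours, then `u^#` can only avoid a larger energy if `σ 1, …, σ (2d)` are again the neighbours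
of `σ 0`. In particular `σ 0, …, σ 3` span a star, with three edges. The energy of the indicator of
a finite set `A` is its edge boundary `2d|A| - 2e(A)`, where `e(A)` counts the edges inside `A`;
hence rearranging the indicator of a unit square, which has four edges, increases the energy.
-/

open Finset
open scoped NNReal ENNReal

section Powers

lemma exists_lt_rpow {K : ℝ≥0∞} (hK : K ≠ ⊤) {q : ℝ} (hq : 0 < q) :
    ∃ m : ℝ≥0, K < (m : ℝ≥0∞) ^ q := by
  lift K to ℝ≥0 using hK
  refine ⟨(K + 1) ^ q⁻¹, ?_⟩
  rw [← ENNReal.coe_rpow_of_nonneg _ hq.le, NNReal.rpow_inv_rpow hq.ne']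
  exact_mod_cast lt_add_one K

lemma ofReal_coe_rpow {p : ℝ} (hp : 0 ≤ p) (t : ℝ≥0) :
    ENNReal.ofReal ((t : ℝ) ^ p) = (t : ℝ≥0∞) ^ p := by
  rw [← ENNReal.ofReal_rpow_of_nonneg t.coe_nonneg hp, ENNReal.ofReal_coe_nnreal]

lemma rpow_add_rpow_sub_one_le {p : ℝ} (hp : 1 ≤ p) (t : ℝ≥0∞) :
    t ^ p + t ^ (p - 1) ≤ (1 + t) ^ p := by
  have hp1 : 0 ≤ p - 1 := sub_nonneg.mpr hp
  have hfactor (s : ℝ≥0∞) : s ^ p = s ^ (p - 1) * s := by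
    simpa using ENNReal.rpow_add_of_nonneg (x := s) (p - 1) 1 hp1 zero_le_one
  calc t ^ p + t ^ (p - 1) = t ^ (p - 1) * (1 + t) := by rw [hfactor, mul_add, mul_one, add_comm]
    _ ≤ (1 + t) ^ (p - 1) * (1 + t) := by gcongr; exact le_add_self
    _ = (1 + t) ^ p := (hfactor _).symm

lemma tsum_ite_mem_one {β : Type*} [DecidableEq β] (s : Finset β) :
    ∑' x, (if x ∈ s then 1 else 0 : ℝ≥0∞) = #s := by
  rw [tsum_eq_sum (s := s) fun x hx ↦ if_neg hx]
  simp

end Powers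

section Rearrangement

variable {α : Type*}

lemma nthLargest_le {u : α → ℝ≥0} {n : ℕ} {t : ℝ≥0} {s : Finset α} (hs : #s < n)
    (hu : ∀ x ∉ s, u x ≤ t) : nthLargest u n ≤ t := by
  refine csSup_le' ?_
  rintro r ⟨Ω, rfl, hr⟩
  obtain ⟨x, hxΩ, hxs⟩ := exists_mem_notMem_of_card_lt_card hs
  exact (hr x hxΩ).trans (hu x hxs)

lemma le_nthLargest {u : α → ℝ≥0} (hbdd : BddAbove (Set.range u)) {n : ℕ} (hn : n ≠ 0)
    {t : ℝ≥0} {s : Finset α} (hs : n ≤ #s) (hu : ∀ x ∈ s, t ≤ u x) : t ≤ nthLargest u n := by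
  obtain ⟨b, hb⟩ := hbdd
  obtain ⟨Ω, hΩs, hΩ⟩ := exists_subset_card_eq hs
  refine le_csSup ⟨b, ?_⟩ ⟨Ω, hΩ, fun x hx ↦ hu x (hΩs hx)⟩
  rintro r ⟨Ω', hΩ', hr⟩
  obtain ⟨x, hx⟩ := card_ne_zero.mp (hΩ'.trans_ne hn)
  exact (hr x hx).trans (hb ⟨x, rfl⟩)

/-- The decreasing rearrangement `u^#` of `u` along the enumeration `σ`. Since `σ` starts at `0`
while `nthLargest` counts from `1`, the point `σ k` receives the value `a_{k+1}`. -/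
def rearrange (σ : ℕ ≃ α) (u : α → ℝ≥0) : α → ℝ≥0 :=
  fun x ↦ nthLargest u (σ.symm x + 1)

/-- The first `n` points `σ 0, …, σ (n - 1)` of the enumeration `σ`: the superlevel sets of a
function rearranged along `σ` are of this form. -/
def firstPoints (σ : ℕ ≃ α) (n : ℕ) : Finset α := (range n).map σ.toEmbedding

lemma mem_firstPoints {σ : ℕ ≃ α} {n : ℕ} {x : α} : x ∈ firstPoints σ n ↔ σ.symm x < n := by
  simp [firstPoints]

lemma card_firstPoints (σ : ℕ ≃ α) (n : ℕ) : #(firstPoints σ n) = n := by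
  simp [firstPoints]

lemma firstPoints_one (σ : ℕ ≃ α) : firstPoints σ 1 = {σ 0} := by
  simp [firstPoints]

lemma firstPoints_mono (σ : ℕ ≃ α) : Monotone (firstPoints σ) :=
  fun _ _ h ↦ map_subset_map.mpr (range_mono h)

/-- The function `1_B + m 1_A`, used with `A ⊆ B` as a test function with the two layers `A`
and `B`. -/
def layered (A B : Finset α) (m : ℝ≥0) : α → ℝ≥0 :=
  (B : Set α).indicator 1 + m • (A : Set α).indicator 1

lemma layered_apply [DecidableEq α] (A B : Finset α) (m : ℝ≥0) (x : α) :
    layered A B m x = (if x ∈ B then 1 else 0) + if x ∈ A then m else 0 := by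
  simp [layered, Set.indicator_apply]

lemma layered_empty_zero (B : Finset α) : layered ∅ B 0 = (B : Set α).indicator 1 := by
  simp [layered]

lemma layered_le (A B : Finset α) (m : ℝ≥0) (x : α) : layered A B m x ≤ 1 + m := by
  classical
  rw [layered_apply]
  gcongr <;> split_ifs <;> simp

lemma support_layered_finite (A B : Finset α) (m : ℝ≥0) :
    (Function.support (layered A B m)).Finite := by
  classical
  refine (A ∪ B).finite_toSet.subset fun x hx ↦ ?_
  contrapose! hx
  simp_all [layered_apply]

lemma nthLargest_layered {A B : Finset α} (hAB : A ⊆ B) (m : ℝ≥0) (n : ℕ) :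
    nthLargest (layered A B m) (n + 1) =
      (if n < #B then 1 else 0) + if n < #A then m else 0 := by
  classical
  have hcard := card_le_card hAB
  have hbdd : BddAbove (Set.range (layered A B m)) :=
    ⟨1 + m, Set.forall_mem_range.mpr (layered_le A B m)⟩
  rcases lt_or_ge n #A with hA | hA
  · rw [if_pos hA, if_pos (hA.trans_le hcard)]
    refine le_antisymm (nthLargest_le (s := ∅) (by simp) fun x _ ↦ layered_le A B m x)
      (le_nthLargest hbdd n.succ_ne_zero hA fun x hx ↦ ?_)
    simp [layered_apply, hx, hAB hx]
  rw [if_neg hA.not_gt, add_zero]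
  rcases lt_or_ge n #B with hB | hB
  · rw [if_pos hB]
    refine le_antisymm (nthLargest_le (Nat.lt_succ_of_le hA) fun x hx ↦ ?_)
      (le_nthLargest hbdd n.succ_ne_zero hB fun x hx ↦ ?_)
    · rw [layered_apply, if_neg hx, add_zero]
      split_ifs <;> simp
    · simp [layered_apply, hx]
  · rw [if_neg hB.not_gt]
    refine le_antisymm (nthLargest_le (Nat.lt_succ_of_le hB) fun x hx ↦ ?_) (by simp)
    simp [layered_apply, hx, notMem_mono hAB hx]

lemma rearrange_layered (σ : ℕ ≃ α) {A B : Finset α} (hAB : A ⊆ B) (m : ℝ≥0) :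
    rearrange σ (layered A B m) = layered (firstPoints σ #A) (firstPoints σ #B) m := by
  classical
  ext x
  simp only [rearrange, nthLargest_layered hAB, layered_apply, mem_firstPoints]

lemma rearrange_indicator (σ : ℕ ≃ α) (B : Finset α) :
    rearrange σ ((B : Set α).indicator 1) =
      (firstPoints σ #B : Set α).indicator 1 := by
  simpa [layered_empty_zero, firstPoints] using rearrange_layered σ (empty_subset B) 0

end Rearrangement

section Lattice

variable {d : ℕ}

lemma latE_ne_zero (i : Fin d) : latE i ≠ 0 := fun h ↦ by
  simpa [latE] using congrFun h i

lemma latE_injective : Function.Injective (latE (d := d)) := fun i j h ↦ by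
  simpa [latE] using congrFun h i

lemma sum_add_latE (x : ZLat d) (i : Fin d) : ∑ k, (x + latE i) k = ∑ k, x k + 1 := by
  simp [latE, sum_add_distrib]

lemma latE_add_latE_ne_zero (i j : Fin d) : latE i + latE j ≠ 0 := fun h ↦ by
  simpa [latE, sum_add_distrib] using congrArg (fun x : ZLat d ↦ ∑ k, x k) h

/-- The lattice points at distance at most one from `c`. -/
def unitBall (c : ZLat d) : Finset (ZLat d) :=
  insert c (univ.image (fun i ↦ c + latE i) ∪ univ.image (fun i ↦ c - latE i))

lemma mem_unitBall {c x : ZLat d} :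
    x ∈ unitBall c ↔ x = c ∨ (∃ i, c + latE i = x) ∨ ∃ i, x + latE i = c := by
  simp only [unitBall, mem_insert, mem_union, mem_image_univ_iff_mem_range, Set.mem_range,
    ← eq_sub_iff_add_eq, eq_comm (a := x)]

lemma card_unitBall (c : ZLat d) : #(unitBall c) = 2 * d + 1 := by
  have hdisj : Disjoint (univ.image fun i ↦ c + latE i) (univ.image fun i ↦ c - latE i) := by
    simp [disjoint_left, sub_eq_add_neg, neg_eq_iff_add_eq_zero, latE_add_latE_ne_zero]
  have hadd : Function.Injective fun i : Fin d ↦ c + latE i :=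
    (add_right_injective c).comp latE_injective
  have hsub : Function.Injective fun i : Fin d ↦ c - latE i :=
    sub_right_injective.comp latE_injective
  rw [unitBall, card_insert_of_notMem (by simp [latE_ne_zero]), card_union_of_disjoint hdisj,
    card_image_of_injective _ hadd, card_image_of_injective _ hsub, card_univ, Fintype.card_fin,
    two_mul]

lemma eq_or_sum_eq_of_mem_unitBall {c x : ZLat d} (hx : x ∈ unitBall c) :
    x = c ∨ ∑ k, x k = ∑ k, c k + 1 ∨ ∑ k, x k + 1 = ∑ k, c k := by
  rcases mem_unitBall.mp hx with hx | ⟨i, rfl⟩ | ⟨i, rfl⟩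
  · exact .inl hx
  · exact .inr (.inl (sum_add_latE c i))
  · exact .inr (.inr (sum_add_latE x i).symm)

lemma eq_or_add_latE_eq_of_mem_unitBall {c x : ZLat d} {i : Fin d} (hx : x ∈ unitBall c)
    (hy : x + latE i ∈ unitBall c) : x = c ∨ x + latE i = c := by
  by_contra! hne
  have hxsum := (eq_or_sum_eq_of_mem_unitBall hx).resolve_left hne.1
  have hysum := (eq_or_sum_eq_of_mem_unitBall hy).resolve_left hne.2
  rw [sum_add_latE] at hysum
  lia

/-- The edges of the lattice graph with both endpoints in `A`; an edge `{x, x + e_i}` is encoded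
as the pair `(x, i)`. -/
def inducedEdges (A : Finset (ZLat d)) : Finset (ZLat d × Fin d) :=
  {e ∈ A ×ˢ univ | e.1 + latE e.2 ∈ A}

lemma mem_inducedEdges {A : Finset (ZLat d)} {e : ZLat d × Fin d} :
    e ∈ inducedEdges A ↔ e.1 ∈ A ∧ e.1 + latE e.2 ∈ A := by
  simp [inducedEdges]

lemma edge_eq_of_midpoint_eq {e e' : ZLat d × Fin d}
    (h : e.1 + (e.1 + latE e.2) = e'.1 + (e'.1 + latE e'.2)) : e = e' := by
  have hdir : e.2 = e'.2 := by
    have := congrFun h e.2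
    simp only [latE, Pi.add_apply, if_true] at this
    by_contra hne
    rw [if_neg hne] at this
    lia
  refine Prod.ext ?_ hdir
  ext k
  have := congrFun h k
  simp only [hdir, Pi.add_apply] at this
  lia

-- Every edge inside `A` contains `c`, and its other endpoint `x + (x + e_i) - c` determines it.
lemma card_inducedEdges_lt_of_subset_unitBall {A : Finset (ZLat d)} {c : ZLat d} (hc : c ∈ A)
    (hA : A ⊆ unitBall c) : #(inducedEdges A) < #A := by
  refine Nat.lt_of_le_sub_one (card_pos.mpr ⟨c, hc⟩) ?_
  rw [← card_erase_of_mem hc]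
  refine card_le_card_of_injOn (fun e ↦ e.1 + (e.1 + latE e.2) - c) (fun e he ↦ ?_)
    fun e _ e' _ h ↦ edge_eq_of_midpoint_eq (sub_left_injective h)
  obtain ⟨hx, hy⟩ := mem_inducedEdges.mp he
  rw [mem_coe, mem_erase]
  rcases eq_or_add_latE_eq_of_mem_unitBall (hA hx) (hA hy) with rfl | rfl
  · simpa [latE_ne_zero] using hy
  · simpa [latE_ne_zero] using hx

/-- The vertices of the unit square with corner `x` in the directions `i` and `j`. -/
def unitSquare (x : ZLat d) (i j : Fin d) : Finset (ZLat d) :=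
  {x, x + latE i, x + latE j, x + latE i + latE j}

lemma card_unitSquare (x : ZLat d) {i j : Fin d} (hij : i ≠ j) : #(unitSquare x i j) = 4 := by
  simp [unitSquare, card_insert_of_notMem, add_assoc, latE_ne_zero, latE_add_latE_ne_zero,
    latE_injective.ne hij]

lemma four_le_card_inducedEdges_unitSquare (x : ZLat d) {i j : Fin d} (hij : i ≠ j) :
    4 ≤ #(inducedEdges (unitSquare x i j)) := by
  have hsub : {(x, i), (x, j), (x + latE i, j), (x + latE j, i)} ⊆
      inducedEdges (unitSquare x i j) := by
    simp [insert_subset_iff, mem_inducedEdges, unitSquare, add_right_comm]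
  have hcard : #{(x, i), (x, j), (x + latE i, j), (x + latE j, i)} = 4 := by
    simp [card_insert_of_notMem, hij, hij.symm, latE_ne_zero]
  exact hcard ▸ card_le_card hsub

end Lattice

section Energy

variable {d : ℕ} {p : ℝ}

/-- The contribution `|u(x + e_i) - u(x)|^p` of the lattice edge `{x, x + e_i}`, encoded as the
pair `(x, i)`, to the energy `‖∇u‖_p^p`. -/
def edgeEnergy (p : ℝ) (u : ZLat d → ℝ≥0) (e : ZLat d × Fin d) : ℝ≥0∞ :=
  ENNReal.ofReal (|(u (e.1 + latE e.2) : ℝ) - (u e.1 : ℝ)| ^ p)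

lemma gradEnergy_eq_tsum_edgeEnergy (u : ZLat d → ℝ≥0) :
    gradEnergy d p u = ∑' e, edgeEnergy p u e :=
  (ENNReal.tsum_prod (f := fun x i ↦ edgeEnergy p u (x, i))).symm

lemma gradNorm_le_gradNorm_iff (hp : 0 < p) {u v : ZLat d → ℝ≥0} :
    gradNorm d p u ≤ gradNorm d p v ↔ gradEnergy d p u ≤ gradEnergy d p v :=
  ENNReal.rpow_le_rpow_iff (one_div_pos.mpr hp)

lemma tsum_ite_fst_mem (A : Finset (ZLat d)) :
    ∑' e : ZLat d × Fin d, (if e.1 ∈ A then 1 else 0 : ℝ≥0∞) = d * #A := by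
  simpa [mul_comm] using tsum_ite_mem_one (A ×ˢ (univ : Finset (Fin d)))

lemma tsum_ite_fst_add_latE_mem (A : Finset (ZLat d)) :
    ∑' e : ZLat d × Fin d, (if e.1 + latE e.2 ∈ A then 1 else 0 : ℝ≥0∞) = d * #A := by
  rw [← tsum_ite_fst_mem, ENNReal.tsum_prod', ENNReal.tsum_prod', ENNReal.tsum_comm,
    ENNReal.tsum_comm (β := Fin d)]
  exact tsum_congr fun i ↦ (Equiv.addRight (latE i)).tsum_eq fun x ↦ if x ∈ A then 1 else 0

lemma gradEnergy_indicator_add_card_inducedEdges (hp : p ≠ 0) (A : Finset (ZLat d)) :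
    gradEnergy d p ((A : Set (ZLat d)).indicator 1) + 2 * #(inducedEdges A) =
      2 * d * #A := by
  have hedge (e : ZLat d × Fin d) :
      edgeEnergy p ((A : Set (ZLat d)).indicator 1) e +
          2 * (if e ∈ inducedEdges A then 1 else 0) =
        (if e.1 ∈ A then 1 else 0) + if e.1 + latE e.2 ∈ A then 1 else 0 := by
    by_cases hx : e.1 ∈ A <;> by_cases hy : e.1 + latE e.2 ∈ A <;>
      simp [edgeEnergy, mem_inducedEdges, hx, hy, hp, one_add_one_eq_two]
  rw [gradEnergy_eq_tsum_edgeEnergy, ← tsum_ite_mem_one, ← ENNReal.tsum_mul_left,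
    ← ENNReal.tsum_add, tsum_congr hedge, ENNReal.tsum_add, tsum_ite_fst_mem,
    tsum_ite_fst_add_latE_mem]
  ring

lemma gradEnergy_indicator_ne_top (hp : p ≠ 0) (A : Finset (ZLat d)) :
    gradEnergy d p ((A : Set (ZLat d)).indicator 1) ≠ ⊤ := by
  refine ne_top_of_le_ne_top (b := 2 * d * #A) (by finiteness) ?_
  exact gradEnergy_indicator_add_card_inducedEdges hp A ▸ le_self_add

lemma card_inducedEdges_le_of_gradEnergy_le (hp : p ≠ 0) {A B : Finset (ZLat d)}
    (hcard : #A = #B)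
    (h : gradEnergy d p ((A : Set (ZLat d)).indicator 1) ≤
      gradEnergy d p ((B : Set (ZLat d)).indicator 1)) :
    #(inducedEdges B) ≤ #(inducedEdges A) := by
  have hA := gradEnergy_indicator_add_card_inducedEdges hp A
  rw [hcard, ← gradEnergy_indicator_add_card_inducedEdges hp B] at hA
  have hmul : (2 * #(inducedEdges B) : ℝ≥0∞) ≤ 2 * #(inducedEdges A) :=
    (ENNReal.add_le_add_iff_left (gradEnergy_indicator_ne_top hp B)).mp
      (hA ▸ by gcongr)
  norm_cast at hmul
  lia

lemma gradEnergy_layered_of_adj_mem (hp : 0 < p) {A B : Finset (ZLat d)}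
    (hAB : ∀ x i, x ∈ A ∨ x + latE i ∈ A → x ∈ B ∧ x + latE i ∈ B) (m : ℝ≥0) :
    gradEnergy d p (layered A B m) =
      (m : ℝ≥0∞) ^ p * gradEnergy d p ((A : Set (ZLat d)).indicator 1) +
        gradEnergy d p ((B : Set (ZLat d)).indicator 1) := by
  simp only [gradEnergy_eq_tsum_edgeEnergy, ← ENNReal.tsum_mul_left, ← ENNReal.tsum_add]
  refine tsum_congr fun e ↦ ?_
  by_cases hA : e.1 ∈ A ∨ e.1 + latE e.2 ∈ A
  · obtain ⟨hx, hy⟩ := hAB e.1 e.2 hA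
    by_cases hxA : e.1 ∈ A <;> by_cases hyA : e.1 + latE e.2 ∈ A <;>
      simp [edgeEnergy, layered_apply, hx, hy, hxA, hyA, hp.ne', ofReal_coe_rpow hp.le]
  · rw [not_or] at hA
    simp [edgeEnergy, layered_apply, hA, hp.ne', Set.indicator_apply]

lemma rpow_mul_edgeEnergy_indicator_add_le (hp : 1 ≤ p) {A B : Finset (ZLat d)} (hAB : A ⊆ B)
    {m : ℝ≥0} {e : ZLat d × Fin d}
    (he : e.1 ∈ A ∧ e.1 + latE e.2 ∉ B ∨ e.1 ∉ B ∧ e.1 + latE e.2 ∈ A) :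
    (m : ℝ≥0∞) ^ p * edgeEnergy p ((A : Set (ZLat d)).indicator 1) e + m ^ (p - 1) ≤
      edgeEnergy p (layered A B m) e := by
  have hone : edgeEnergy p ((A : Set (ZLat d)).indicator 1) e = 1 := by
    rcases he with ⟨hx, hy⟩ | ⟨hx, hy⟩
    · simp [edgeEnergy, hx, notMem_mono hAB hy]
    · simp [edgeEnergy, hy, notMem_mono hAB hx]
  have hjump : |(layered A B m (e.1 + latE e.2) : ℝ) - layered A B m e.1| = (1 + m : ℝ≥0) := by
    rcases he with ⟨hx, hy⟩ | ⟨hx, hy⟩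
    · rw [abs_sub_comm]
      simpa [layered_apply, hx, hy, hAB hx, notMem_mono hAB hy] using NNReal.abs_eq (1 + m)
    · simpa [layered_apply, hx, hy, hAB hy, notMem_mono hAB hx] using NNReal.abs_eq (1 + m)
  rw [hone, mul_one, edgeEnergy, hjump, ofReal_coe_rpow (zero_le_one.trans hp)]
  exact_mod_cast rpow_add_rpow_sub_one_le hp m

lemma rpow_mul_edgeEnergy_indicator_le (hp : 1 ≤ p) {A B : Finset (ZLat d)} (hAB : A ⊆ B)
    (m : ℝ≥0) (e : ZLat d × Fin d) :
    (m : ℝ≥0∞) ^ p * edgeEnergy p ((A : Set (ZLat d)).indicator 1) e ≤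
      edgeEnergy p (layered A B m) e := by
  have hp0 : 0 < p := by linarith
  by_cases he : e.1 ∈ A ∧ e.1 + latE e.2 ∉ B ∨ e.1 ∉ B ∧ e.1 + latE e.2 ∈ A
  · exact le_self_add.trans (rpow_mul_edgeEnergy_indicator_add_le hp hAB he)
  by_cases hx : e.1 ∈ A <;> by_cases hy : e.1 + latE e.2 ∈ A
  · simp [edgeEnergy, hx, hy, hp0.ne']
  · have hyB : e.1 + latE e.2 ∈ B := by tauto
    simp [edgeEnergy, layered_apply, hx, hy, hAB hx, hyB, ofReal_coe_rpow hp0.le]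
  · have hxB : e.1 ∈ B := by tauto
    simp [edgeEnergy, layered_apply, hx, hy, hAB hy, hxB, ofReal_coe_rpow hp0.le]
  · simp [edgeEnergy, hx, hy, hp0.ne']

lemma rpow_mul_gradEnergy_indicator_add_le (hp : 1 ≤ p) {A B : Finset (ZLat d)} (hAB : A ⊆ B)
    (m : ℝ≥0) {x : ZLat d} {i : Fin d}
    (hxi : x ∈ A ∧ x + latE i ∉ B ∨ x ∉ B ∧ x + latE i ∈ A) :
    (m : ℝ≥0∞) ^ p * gradEnergy d p ((A : Set (ZLat d)).indicator 1) + m ^ (p - 1) ≤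
      gradEnergy d p (layered A B m) := by
  simp only [gradEnergy_eq_tsum_edgeEnergy, ← ENNReal.tsum_mul_left]
  rw [← tsum_ite_eq (x, i) fun _ ↦ (m : ℝ≥0∞) ^ (p - 1), ← ENNReal.tsum_add]
  refine ENNReal.tsum_le_tsum fun e ↦ ?_
  split_ifs with he
  · exact rpow_mul_edgeEnergy_indicator_add_le hp hAB (he ▸ hxi)
  · simpa using rpow_mul_edgeEnergy_indicator_le hp hAB m e

lemma gradEnergy_layered_unitBall (hp : 0 < p) (c : ZLat d) (m : ℝ≥0) :
    gradEnergy d p (layered {c} (unitBall c) m) =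
      (m : ℝ≥0∞) ^ p * gradEnergy d p ((({c} : Finset (ZLat d)) : Set (ZLat d)).indicator 1) +
        gradEnergy d p ((unitBall c : Set (ZLat d)).indicator 1) := by
  refine gradEnergy_layered_of_adj_mem hp (fun x i h ↦ ?_) m
  simp only [mem_singleton] at h
  rcases h with rfl | rfl <;> simp [mem_unitBall]

lemma unitBall_subset_of_gradEnergy_layered_le (hp : 1 ≤ p) {c : ZLat d} {B : Finset (ZLat d)}
    (hc : c ∈ B) {m : ℝ≥0}
    (hm : gradEnergy d p ((unitBall c : Set (ZLat d)).indicator 1) < m ^ (p - 1))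
    (h : gradEnergy d p (layered {c} B m) ≤ gradEnergy d p (layered {c} (unitBall c) m)) :
    unitBall c ⊆ B := by
  have hp0 : 0 < p := zero_lt_one.trans_le hp
  intro x hx
  by_contra hxB
  obtain ⟨y, i, hyi⟩ : ∃ y i, y ∈ ({c} : Finset (ZLat d)) ∧ y + latE i ∉ B ∨
      y ∉ B ∧ y + latE i ∈ ({c} : Finset (ZLat d)) := by
    rcases mem_unitBall.mp hx with rfl | ⟨i, rfl⟩ | ⟨i, hxi⟩
    · exact absurd hc hxB
    · exact ⟨c, i, .inl ⟨mem_singleton_self c, hxB⟩⟩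
    · exact ⟨x, i, .inr ⟨hxB, mem_singleton.mpr hxi⟩⟩
  have hle := (rpow_mul_gradEnergy_indicator_add_le hp (singleton_subset_iff.mpr hc) m hyi).trans h
  rw [gradEnergy_layered_unitBall hp0, ENNReal.add_le_add_iff_left (ENNReal.mul_ne_top
    (by finiteness) (gradEnergy_indicator_ne_top hp0.ne' {c}))] at hle
  exact hm.not_ge hle

end Energy

lemma unitBall_eq_firstPoints {d : ℕ} {p : ℝ} (hp : 1 < p) {σ : ℕ ≃ ZLat d}
    (hσ : ∀ u : ZLat d → ℝ≥0, (Function.support u).Finite →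
      gradEnergy d p (rearrange σ u) ≤ gradEnergy d p u) :
    unitBall (σ 0) = firstPoints σ #(unitBall (σ 0)) := by
  obtain ⟨m, hm⟩ := exists_lt_rpow
    (gradEnergy_indicator_ne_top (zero_lt_one.trans hp).ne' (unitBall (σ 0))) (sub_pos.mpr hp)
  refine eq_of_subset_of_card_le ?_ (card_firstPoints σ _).le
  refine unitBall_subset_of_gradEnergy_layered_le hp.le (by simp [mem_firstPoints, card_unitBall])
    hm ?_
  have h := hσ _ (support_layered_finite {σ 0} (unitBall (σ 0)) m)
  rwa [rearrange_layered σ (by simp [mem_unitBall]), card_singleton, firstPoints_one] at h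

theorem stmt0_general {d : ℕ} {p : ℝ} (hd : 2 ≤ d) (hp : 1 < p) :
    ¬ ∃ σ : ℕ ≃ ZLat d, ∀ u : ZLat d → ℝ≥0, (Function.support u).Finite →
      gradNorm d p (rearrange σ u) ≤ gradNorm d p u := by
  rintro ⟨σ, hσ⟩
  have hp0 : 0 < p := zero_lt_one.trans hp
  simp only [gradNorm_le_gradNorm_iff hp0] at hσ
  let Q := unitSquare (σ 0) ⟨0, by lia⟩ ⟨1, hd⟩
  have hQ : #Q = 4 := card_unitSquare _ (by simp)
  have hfirst : firstPoints σ #Q ⊆ unitBall (σ 0) := by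
    rw [unitBall_eq_firstPoints hp hσ, card_unitBall]
    exact firstPoints_mono σ (by lia)
  have hstar : #(inducedEdges (firstPoints σ #Q)) < #Q := by
    simpa [card_firstPoints] using
      card_inducedEdges_lt_of_subset_unitBall (by simp [mem_firstPoints, hQ]) hfirst
  have hsquare : #Q ≤ #(inducedEdges Q) :=
    hQ.trans_le (four_le_card_inducedEdges_unitSquare _ (by simp))
  have henergy := hσ ((Q : Set (ZLat d)).indicator 1)
    (Q.finite_toSet.subset Set.support_indicator_subset)
  rw [rearrange_indicator] at henergy
  have hle := card_inducedEdges_le_of_gradEnergy_le hp0.ne' (card_firstPoints σ #Q) henergy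
  lia

/-- There is no bijection σ : ℕ → ℤ² such that rearranging every finitely supported
nonnegative function decreasingly along σ never increases the Sobolev seminorm. -/
theorem stmt0 :
    ¬ ∃ σ : ℕ ≃ ZLat 2, ∀ u : ZLat 2 → NNReal, (Function.support u).Finite →
      gradNorm 2 2 (fun x => nthLargest u (σ.symm x + 1)) ≤ gradNorm 2 2 u :=
  stmt0_general le_rfl one_lt_two

end
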